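/- arXiv:1707.08283 — 2 statements merged into one kernel-verified Lean document; each statement's English description precedes it below -/
import Mathlib

section
/- Let X be a connected graph and suppose to each pair of vertices a,b there is associated a connected subgraph A(a,b) containing a and b. Suppose there exists D>0 such that (i) if a and b are joined by an edge then A(a,b) has diameter at most D, and (ii) for all vertices a,b,c, the subgraph A(a,b) is contained in the D-neighborhood of A(a,c) ∪ A(c,b). Then X is Gromov hyperbolic, with hyperbolicity constant depending only on D. -/
/-- Gromov hyperbolicity of a connected graph with its path metric, expressed by the
four-point condition (equivalent, up to a universal change of constant, to all geodesic
triangles being thin). -/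
def GromovHyperbolicGraph {V : Type*} (G : SimpleGraph V) (δ : ℝ) : Prop :=
  0 ≤ δ ∧ ∀ x y z w : V,
    (G.dist x z : ℝ) + (G.dist y w : ℝ) ≤
      max ((G.dist x y : ℝ) + (G.dist z w : ℝ)) ((G.dist x w : ℝ) + (G.dist y z : ℝ)) + δ

theorem aux_R (N : ℕ) : ∃ R : ℕ, 2 * N ≤ R ∧ ∀ t, R < t → ∃ m, 6 * t ≤ 2 ^ m ∧
    2 * N + N * (m + 2) < t := by
  have h0 : ∀ s : ℕ, s * s + 15 * s + 16 ≤ 2 ^ (s + 10) := by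
    intro s
    induction s with
    | zero => norm_num
    | succ s ih => rw [show s + 1 + 10 = (s + 10) + 1 by ring, pow_succ]; nlinarith
  have h1 : ∀ j : ℕ, 6 * N * (6 * N + 10 + j + 5) ≤ 2 ^ (6 * N + 10 + j) := by
    intro j
    induction j with
    | zero => have := h0 (6 * N); simp only [add_zero]; nlinarith
    | succ j ih =>
      rw [show 6 * N + 10 + (j + 1) = (6 * N + 10 + j) + 1 by ring, pow_succ]
      nlinarith [Nat.zero_le N, Nat.zero_le j, Nat.zero_le (N * N), Nat.zero_le (N * j)]
  refine ⟨2 * N + 2 ^ (6 * N + 10), Nat.le_add_right _ _, fun t ht => ?_⟩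
  have hex : ∃ m, 6 * t ≤ 2 ^ m := ⟨6 * t, Nat.lt_two_pow_self.le⟩
  classical
  refine ⟨Nat.find hex, Nat.find_spec hex, ?_⟩
  set m := Nat.find hex with hm
  have hs : 6 * t ≤ 2 ^ m := Nat.find_spec hex
  have hlt : 6 * N + 10 < m := by
    have : 2 ^ (6 * N + 10) < 2 ^ m := by omega
    exact (Nat.pow_lt_pow_iff_right (by norm_num)).1 this
  obtain ⟨j, hj⟩ := Nat.exists_eq_add_of_lt hlt
  have h2 : ¬ 6 * t ≤ 2 ^ (6 * N + 10 + j) := Nat.find_min hex (by omega)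
  have h3 := h1 j
  rw [hj]
  nlinarith

section
variable {V : Type} {G : SimpleGraph V}

theorem aux_mid (hG : G.Connected) (a b : V) (k : ℕ) (hk : k ≤ G.dist a b) :
    ∃ c, G.dist a c = k ∧ k + G.dist c b = G.dist a b := by
  obtain ⟨p, hp⟩ := hG.exists_walk_length_eq_dist a b
  have h1 := SimpleGraph.dist_le (p.take k)
  have h2 := SimpleGraph.dist_le (p.drop k)
  have h3 := hG.dist_triangle (u := a) (v := p.getVert k) (w := b)
  rw [SimpleGraph.Walk.take_length] at h1
  rw [SimpleGraph.Walk.drop_length] at h2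
  refine ⟨p.getVert k, ?_, ?_⟩ <;> omega

theorem aux_conn {W : Type} {H : SimpleGraph W} (P Q : W → Prop) (h : ∀ x, P x ∨ Q x)
    {u v : W} (p : H.Walk u v) (hu : P u) (hv : Q v) :
    ∃ x y, (x = y ∨ H.Adj x y) ∧ P x ∧ Q y := by
  induction p with
  | nil => exact ⟨_, _, Or.inl rfl, hu, hv⟩
  | cons hadj p ih =>
    rename_i a b c
    rcases h b with hb | hb
    · exact ih hb hv
    · exact ⟨a, b, Or.inr hadj, hu, hb⟩

theorem aux_log (hG : G.Connected) (A : V → V → Set V) (N : ℕ)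
    (hl : ∀ a b : V, a ∈ A a b) (hr : ∀ a b : V, b ∈ A a b)
    (h1 : ∀ a b : V, G.Adj a b → ∀ x ∈ A a b, ∀ y ∈ A a b, G.dist x y ≤ N)
    (h2 : ∀ a b c : V, ∀ x ∈ A a b, ∃ y, (y ∈ A a c ∨ y ∈ A c b) ∧ G.dist x y ≤ N)
    (m : ℕ) : ∀ a b : V, G.dist a b ≤ 2 ^ m → ∀ z ∈ A a b,
    ∃ p, G.dist a p + G.dist p b = G.dist a b ∧ G.dist z p ≤ N * (m + 2) := by
  induction m with
  | zero =>
    intro a b hab z hz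
    refine ⟨a, by simp, ?_⟩
    rcases Nat.lt_or_ge 0 (G.dist a b) with h | h
    · have hadj : G.Adj a b := SimpleGraph.dist_eq_one_iff_adj.1 (by simp at hab; omega)
      have := h1 a b hadj z hz a (hl a b)
      omega
    · have : a = b := (hG.dist_eq_zero_iff).1 (by omega)
      subst this
      by_cases hza : z = a
      · subst hza; simp
      · have hpos : 1 ≤ G.dist a z := hG.pos_dist_of_ne (Ne.symm hza)
        obtain ⟨c, hc, -⟩ := aux_mid hG a z 1 hpos
        have hadj : G.Adj a c := SimpleGraph.dist_eq_one_iff_adj.1 hc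
        obtain ⟨y, hy, hzy⟩ := h2 a a c z hz
        have h3 := hG.dist_triangle (u := z) (v := y) (w := a)
        rcases hy with hy | hy
        · have := h1 a c hadj y hy a (hl _ _)
          omega
        · have := h1 c a hadj.symm y hy a (hr _ _)
          omega
  | succ m ih =>
    intro a b hab z hz
    rw [pow_succ] at hab
    obtain ⟨c, hc1, hc2⟩ := aux_mid hG a b (G.dist a b / 2) (by omega)
    obtain ⟨y, hy, hzy⟩ := h2 a b c z hz
    rcases hy with hy | hy
    · obtain ⟨p, hp, hyp⟩ := ih a c (by omega) y hy
      refine ⟨p, ?_, ?_⟩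
      · have h3 := hG.dist_triangle (u := p) (v := c) (w := b)
        have h4 := hG.dist_triangle (u := a) (v := p) (w := b)
        omega
      · have h3 := hG.dist_triangle (u := z) (v := y) (w := p)
        nlinarith
    · obtain ⟨p, hp, hyp⟩ := ih c b (by omega) y hy
      refine ⟨p, ?_, ?_⟩
      · have h3 := hG.dist_triangle (u := a) (v := c) (w := p)
        have h4 := hG.dist_triangle (u := a) (v := p) (w := b)
        omega
      · have h3 := hG.dist_triangle (u := z) (v := y) (w := p)
        nlinarith

theorem aux_unif (hG : G.Connected) (A : V → V → Set V) (N : ℕ)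
    (hl : ∀ a b : V, a ∈ A a b) (hr : ∀ a b : V, b ∈ A a b)
    (h1 : ∀ a b : V, G.Adj a b → ∀ x ∈ A a b, ∀ y ∈ A a b, G.dist x y ≤ N)
    (h2 : ∀ a b c : V, ∀ x ∈ A a b, ∃ y, (y ∈ A a c ∨ y ∈ A c b) ∧ G.dist x y ≤ N)
    (R : ℕ) (hR : 2 * N ≤ R)
    (hR2 : ∀ t, R < t → ∃ m, 6 * t ≤ 2 ^ m ∧ 2 * N + N * (m + 2) < t) (n : ℕ) :
    ∀ a b : V, G.dist a b = n → ∀ z ∈ A a b,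
    ∃ p, G.dist a p + G.dist p b = G.dist a b ∧ G.dist z p ≤ R := by
  induction n using Nat.strong_induction_on with
  | _ n ih =>
  intro a b hab z hz
  have tri : ∀ u v w : V, G.dist u w ≤ G.dist u v + G.dist v w :=
    fun u v w => hG.dist_triangle
  have sym : ∀ u v : V, G.dist u v = G.dist v u := fun u v => SimpleGraph.dist_comm
  classical
  have hex : ∃ t, ∃ p, G.dist a p + G.dist p b = G.dist a b ∧ G.dist z p = t :=
    ⟨_, a, by simp, rfl⟩
  obtain ⟨p, hp, hpt⟩ := Nat.find_spec hex
  have hmin : ∀ q, G.dist a q + G.dist q b = G.dist a b → Nat.find hex ≤ G.dist z q :=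
    fun q hq => Nat.find_min' hex ⟨q, hq, rfl⟩
  generalize Nat.find hex = t at hpt hmin
  by_contra hcon
  have htR : R < t := by
    by_contra h
    exact hcon ⟨p, hp, by omega⟩
  obtain ⟨m, hm1, hm2⟩ := hR2 t htR
  -- left cut point
  obtain ⟨a', ha1, ha2⟩ := aux_mid hG a p (G.dist a p - 3 * t) (by omega)
  obtain ⟨b', hb1, hb2⟩ := aux_mid hG p b (min (3 * t) (G.dist p b)) (by omega)
  have e1 := tri a a' b
  have e2 := tri a' p b
  have e3 := tri a' p b'
  have e4 := tri a' b' b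
  have e5 := tri a b' b
  have e6 := tri a p b'
  obtain ⟨y, hy, hzy⟩ := h2 a b a' z hz
  rcases hy with hy | hy
  · -- near the left part
    rcases Nat.eq_zero_or_pos (G.dist a a') with h0 | h0
    · obtain ⟨q, hq, hyq⟩ := aux_log hG A N hl hr h1 h2 m a a' (by omega) y hy
      have := hmin q (by have := tri q a' b; have := tri a q b; omega)
      have := tri z y q
      omega
    · obtain ⟨q, hq, hyq⟩ := ih (G.dist a a') (by omega) a a' rfl y hy
      have := tri a q p
      have := tri q z p
      have := sym q z
      have := tri z y q
      omega
  · obtain ⟨y', hy', hyy'⟩ := h2 a' b b' y hy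
    have hzy' := tri z y y'
    rcases hy' with hy' | hy'
    · obtain ⟨q, hq, hyq⟩ := aux_log hG A N hl hr h1 h2 m a' b' (by omega) y' hy'
      have := hmin q (by
        have := tri a a' q; have := tri q b' b; have := tri a q b; omega)
      have := tri z y' q
      omega
    · rcases Nat.eq_zero_or_pos (G.dist b' b) with h0 | h0
      · obtain ⟨q, hq, hyq⟩ := aux_log hG A N hl hr h1 h2 m b' b (by omega) y' hy'
        have := hmin q (by have := tri a b' q; have := tri a q b; omega)
        have := tri z y' q
        omega
      · obtain ⟨q, hq, hyq⟩ := ih (G.dist b' b) (by omega) b' b rfl y' hy'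
        have := tri p q b
        have := tri p z q
        have := sym p z
        have := tri z y' q
        omega

theorem aux_final (hG : G.Connected) (A : V → V → Set V) (N : ℕ)
    (hl : ∀ a b : V, a ∈ A a b) (hr : ∀ a b : V, b ∈ A a b)
    (h2 : ∀ a b c : V, ∀ x ∈ A a b, ∃ y, (y ∈ A a c ∨ y ∈ A c b) ∧ G.dist x y ≤ N)
    (hc : ∀ a b : V, (SimpleGraph.induce (A a b) G).Connected)
    (R : ℕ) (hR : ∀ a b : V, ∀ z ∈ A a b,
      ∃ p, G.dist a p + G.dist p b = G.dist a b ∧ G.dist z p ≤ R) (x y z w : V) :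
    G.dist x z + G.dist y w ≤ G.dist x y + G.dist z w + (6 * (N + R) + 2) ∨
    G.dist x z + G.dist y w ≤ G.dist x w + G.dist y z + (6 * (N + R) + 2) := by
  have tri : ∀ u v w : V, G.dist u w ≤ G.dist u v + G.dist v w :=
    fun u v w => hG.dist_triangle
  have sym : ∀ u v : V, G.dist u v = G.dist v u := fun u v => SimpleGraph.dist_comm
  obtain ⟨W⟩ := (hc x z).preconnected ⟨x, hl x z⟩ ⟨z, hr x z⟩
  obtain ⟨⟨p, hp⟩, ⟨p', hp'⟩, hpp, ⟨u, hu, hpu⟩, ⟨v, hv, hpv⟩⟩ := aux_conn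
    (fun s => ∃ u, G.dist x u + G.dist u w = G.dist x w ∧ G.dist s.1 u ≤ N + R)
    (fun s => ∃ u, G.dist w u + G.dist u z = G.dist w z ∧ G.dist s.1 u ≤ N + R)
    (by
      rintro ⟨s, hs⟩
      obtain ⟨q, hq, hsq⟩ := h2 x z w s hs
      rcases hq with hq | hq
      · obtain ⟨u, hu, hqu⟩ := hR x w q hq
        exact Or.inl ⟨u, hu, by have := tri s q u; simp only; omega⟩
      · obtain ⟨u, hu, hqu⟩ := hR w z q hq
        exact Or.inr ⟨u, hu, by have := tri s q u; simp only; omega⟩)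
    W ⟨x, by simp, by simp⟩ ⟨z, by simp, by simp⟩
  simp only at hpu hpv
  have hpp1 : G.dist p p' ≤ 1 := by
    rcases hpp with h | h
    · have : p = p' := congrArg Subtype.val h
      simp [this]
    · have : G.Adj p p' := h
      exact (SimpleGraph.dist_eq_one_iff_adj.2 this).le
  have k1 := tri x u p
  have k2 := tri p u w
  have k3 := tri w v p
  have k4 := tri p v z
  have k5 := tri p p' v
  have k6 := tri x p z
  have s1 := sym u p
  have s2 := sym v p
  have s3 := sym w p
  have s4 := sym w z
  obtain ⟨q, hq, hpq⟩ := h2 x z y p hp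
  rcases hq with hq | hq
  · left
    obtain ⟨r, hr', hqr⟩ := hR x y q hq
    have := tri x r w
    have := tri y r w
    have := tri r p w
    have := tri p q r
    have := sym r p
    have := sym y r
    omega
  · right
    obtain ⟨r, hr', hqr⟩ := hR y z q hq
    have := tri y r w
    have := tri z r w
    have := tri r p w
    have := tri p q r
    have := sym r p
    have := sym z r
    omega

end

/-- The Masur–Schleimer/Bowditch hyperbolicity criterion: if a connected graph `X` carries,
for each pair of vertices `a, b`, a connected subgraph `A a b` containing `a` and `b`, and
there is `D > 0` such that `A a b` has diameter at most `D` whenever `a` and `b` are adjacent,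
and `A a b` lies in the `D`-neighborhood of `A a c ∪ A c b` for all `a, b, c`, then `X` is
Gromov hyperbolic with constant depending only on `D`. -/
theorem stmt_0 :
    ∃ f : ℝ → ℝ, ∀ (V : Type) (G : SimpleGraph V), G.Connected →
      ∀ (A : V → V → Set V) (D : ℝ), 0 < D →
      (∀ a b : V, a ∈ A a b) →
      (∀ a b : V, b ∈ A a b) →
      (∀ a b : V, (SimpleGraph.induce (A a b) G).Connected) →
      (∀ a b : V, G.Adj a b → ∀ x ∈ A a b, ∀ y ∈ A a b, (G.dist x y : ℝ) ≤ D) →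
      (∀ a b c : V, ∀ x ∈ A a b,
        ∃ y, (y ∈ A a c ∨ y ∈ A c b) ∧ (G.dist x y : ℝ) ≤ D) →
      GromovHyperbolicGraph G (f D) := by
  classical
  choose F hF1 hF2 using aux_R
  refine ⟨fun D => ((6 * (⌈D⌉₊ + F ⌈D⌉₊) + 2 : ℕ) : ℝ), ?_⟩
  intro V G hG A D hD hl hr hc h1 h2
  have hle : ∀ n : ℕ, (n : ℝ) ≤ D → n ≤ ⌈D⌉₊ := fun n hn => by
    exact_mod_cast hn.trans (Nat.le_ceil D)
  have h1' : ∀ a b : V, G.Adj a b → ∀ x ∈ A a b, ∀ y ∈ A a b, G.dist x y ≤ ⌈D⌉₊ :=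
    fun a b hab x hx y hy => hle _ (h1 a b hab x hx y hy)
  have h2' : ∀ a b c : V, ∀ x ∈ A a b, ∃ y, (y ∈ A a c ∨ y ∈ A c b) ∧ G.dist x y ≤ ⌈D⌉₊ := by
    intro a b c x hx
    obtain ⟨y, hy, hxy⟩ := h2 a b c x hx
    exact ⟨y, hy, hle _ hxy⟩
  refine ⟨Nat.cast_nonneg _, fun x y z w => ?_⟩
  have key := aux_final hG A ⌈D⌉₊ hl hr h2' hc (F ⌈D⌉₊)
    (fun a b z hz => aux_unif hG A ⌈D⌉₊ hl hr h1' h2' _ (hF1 _) (hF2 _) _ a b rfl z hz) x y z w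
  rw [← max_add_add_right, le_max_iff]
  beta_reduce
  exact_mod_cast key
end

section
/- Let X be a connected graph. Suppose for each pair of vertices a, b there is a connected subgraph A(a,b) containing a and b such that: (i) if i(a,b) ≤ 2 then A(a,b) has diameter at most 2, and (ii) there is a constant D such that for all a, b, d, every vertex of A(a,b) is within distance D of A(a,d) ∪ A(d,b). Then X is δ-hyperbolic for some δ depending only on D. -/
theorem aux_split {V : Type} {X : SimpleGraph V} (hX : X.Connected) (a b : V) (j : ℕ)
    (hj : j ≤ X.dist a b) : ∃ c, X.dist a c = j ∧ X.dist c b + j = X.dist a b := by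
  obtain ⟨p, hp⟩ := hX.exists_walk_length_eq_dist a b
  refine ⟨p.getVert j, ?_⟩
  have h1 := SimpleGraph.dist_le (p.take j)
  have h2 := SimpleGraph.dist_le (p.drop j)
  have h3 := hX.dist_triangle (u := a) (v := p.getVert j) (w := b)
  rw [SimpleGraph.Walk.take_length] at h1
  rw [SimpleGraph.Walk.drop_length] at h2
  omega

/-- `w` is within `h` of the geodesic interval between `a` and `b`. -/
def NearI {V : Type} (X : SimpleGraph V) (a b w : V) (h : ℕ) : Prop :=
  ∃ s, X.dist a s + X.dist s b = X.dist a b ∧ X.dist w s ≤ h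

theorem aux_log_s7 {V : Type} {X : SimpleGraph V} (hX : X.Connected) (A : V → V → Set V)
    (hA1 : ∀ a b : V, a ∈ A a b) (hA2 : ∀ a b : V, b ∈ A a b)
    (hi : ∀ a b : V, X.Adj a b → ∀ x ∈ A a b, ∀ y ∈ A a b, X.dist x y ≤ 2)
    (D : ℕ)
    (hii : ∀ a b d : V, ∀ x ∈ A a b, ∃ y, (y ∈ A a d ∨ y ∈ A d b) ∧ X.dist x y ≤ D)
    (k : ℕ) : ∀ a b : V, X.dist a b ≤ 2 ^ k → ∀ w ∈ A a b, NearI X a b w ((k + 1) * D + 2) := by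
  induction k with
  | zero =>
    intro a b hab w hw
    refine ⟨a, by simp, ?_⟩
    by_cases h : a = b
    · subst h
      by_cases hc : ∃ c, X.Adj a c
      · obtain ⟨c, hc⟩ := hc
        obtain ⟨y, hy, hwy⟩ := hii a a c w hw
        have hya : X.dist y a ≤ 2 := by
          rcases hy with hy | hy
          · exact hi a c hc y hy a (hA1 _ _)
          · exact hi c a hc.symm y hy a (hA2 _ _)
        have := hX.dist_triangle (u := w) (v := y) (w := a)
        omega
      · have : w = a := by
          by_contra hne
          have hpos : 0 < X.dist a w := hX.pos_dist_of_ne (Ne.symm hne)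
          obtain ⟨c, hc1, -⟩ := aux_split hX a w 1 hpos
          exact hc ⟨c, SimpleGraph.dist_eq_one_iff_adj.mp hc1⟩
        subst this
        simp
    · have hpos : 0 < X.dist a b := hX.pos_dist_of_ne h
      have hadj : X.Adj a b := SimpleGraph.dist_eq_one_iff_adj.mp (by simp at hab; omega)
      have := hi a b hadj w hw a (hA1 _ _)
      omega
  | succ k ih =>
    intro a b hab w hw
    rw [pow_succ] at hab
    obtain ⟨c, hc1, hc2⟩ := aux_split hX a b (X.dist a b / 2) (by omega)
    obtain ⟨y, hy, hwy⟩ := hii a b c w hw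
    have key : (k + 1 + 1) * D + 2 = ((k + 1) * D + 2) + D := by ring
    rw [key]
    rcases hy with hy | hy
    · obtain ⟨s, hs, hys⟩ := ih a c (by omega) y hy
      refine ⟨s, ?_, ?_⟩
      · have := hX.dist_triangle (u := s) (v := c) (w := b)
        have := hX.dist_triangle (u := a) (v := s) (w := b)
        omega
      · have := hX.dist_triangle (u := w) (v := y) (w := s)
        omega
    · obtain ⟨s, hs, hys⟩ := ih c b (by omega) y hy
      refine ⟨s, ?_, ?_⟩
      · have := hX.dist_triangle (u := a) (v := c) (w := s)
        have := hX.dist_triangle (u := a) (v := s) (w := b)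
        omega
      · have := hX.dist_triangle (u := w) (v := y) (w := s)
        omega

theorem aux_near {V : Type} {X : SimpleGraph V} (hX : X.Connected) (A : V → V → Set V)
    (hA1 : ∀ a b : V, a ∈ A a b) (hA2 : ∀ a b : V, b ∈ A a b)
    (hi : ∀ a b : V, X.Adj a b → ∀ x ∈ A a b, ∀ y ∈ A a b, X.dist x y ≤ 2)
    (D : ℕ)
    (hii : ∀ a b d : V, ∀ x ∈ A a b, ∃ y, (y ∈ A a d ∨ y ∈ A d b) ∧ X.dist x y ≤ D)
    (k H : ℕ) (hH : H = (k + 3) * D + 2) (hk : 4 * H + 6 * D + 2 ≤ 2 ^ k) (n : ℕ) :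
    ∀ a b : V, X.dist a b = n → ∀ w ∈ A a b, NearI X a b w H := by
  have hlog := aux_log_s7 hX A hA1 hA2 hi D hii
  have hH' : H = ((k + 1) * D + 2) + 2 * D := by rw [hH]; ring
  have hH3 : 3 * D + 2 ≤ H := by rw [hH]; nlinarith [Nat.zero_le (k * D)]
  induction n using Nat.strong_induction_on with
  | _ n ih =>
  intro a b hab w hw
  by_cases hn : n ≤ 1
  · obtain ⟨s, hs, hws⟩ := hlog 0 a b (by simp; omega) w hw
    exact ⟨s, hs, by omega⟩
  -- a priori bound
  have hm : NearI X a b w (H + D) := by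
    obtain ⟨c, hc1, hc2⟩ := aux_split hX a b 1 (by omega)
    obtain ⟨y, hy, hwy⟩ := hii a b c w hw
    rcases hy with hy | hy
    · obtain ⟨s, hs, hys⟩ := ih _ (by omega) a c rfl y hy
      refine ⟨s, ?_, ?_⟩
      · have := hX.dist_triangle (u := s) (v := c) (w := b)
        have := hX.dist_triangle (u := a) (v := s) (w := b)
        omega
      · have := hX.dist_triangle (u := w) (v := y) (w := s)
        omega
    · obtain ⟨s, hs, hys⟩ := ih _ (by omega) c b rfl y hy
      refine ⟨s, ?_, ?_⟩
      · have := hX.dist_triangle (u := a) (v := c) (w := s)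
        have := hX.dist_triangle (u := a) (v := s) (w := b)
        omega
      · have := hX.dist_triangle (u := w) (v := y) (w := s)
        omega
  obtain ⟨m, hm, hwm⟩ := hm
  obtain ⟨L, hL⟩ : ∃ L, L = 2 * H + 3 * D + 1 := ⟨_, rfl⟩
  obtain ⟨p, hp1, hp2⟩ := aux_split hX a m (X.dist a m - L) (by omega)
  obtain ⟨q, hq1, hq2⟩ := aux_split hX m b (min L (X.dist m b)) (by omega)
  have sym : ∀ u v, X.dist u v = X.dist v u := fun u v => SimpleGraph.dist_comm
  have tri : ∀ u v w, X.dist u w ≤ X.dist u v + X.dist v w := fun u v w => hX.dist_triangle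
  obtain ⟨y, hy, hwy⟩ := hii a b p w hw
  rcases hy with hy | hy
  · by_cases hpa : X.dist a p = 0
    · obtain ⟨s, hs, hys⟩ := hlog 0 a p (by simp; omega) y hy
      refine ⟨a, by simp, ?_⟩
      have := tri w y s
      have := tri w s a
      have := sym a s
      omega
    · obtain ⟨r, hr, hyr⟩ := ih _ (by omega) a p rfl y hy
      exfalso
      have := tri w y r
      have := tri r w m
      have := tri a r m
      have := sym r w
      omega
  · obtain ⟨z, hz, hyz⟩ := hii p b q y hy
    rcases hz with hz | hz
    · have h1 := tri p m q
      obtain ⟨s, hs, hzs⟩ := hlog k p q (by omega) z hz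
      refine ⟨s, ?_, ?_⟩
      · have := tri a p s
        have := tri s q b
        have := tri a s b
        omega
      · have := tri w y z
        have := tri w z s
        omega
    · by_cases hqb : X.dist q b = 0
      · obtain ⟨s, hs, hys⟩ := hlog 0 q b (by simp; omega) z hz
        refine ⟨b, by simp, ?_⟩
        have := tri w y z
        have := tri w z s
        have := tri w s b
        omega
      · obtain ⟨r, hr, hyr⟩ := ih _ (by omega) q b rfl z hz
        exfalso
        have := tri w y z
        have := tri w z r
        have := tri m w r
        have := tri m r b
        have := sym m w
        omega

theorem aux_four {V : Type} {X : SimpleGraph V} (hX : X.Connected) (A : V → V → Set V)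
    (hA1 : ∀ a b : V, a ∈ A a b) (hA2 : ∀ a b : V, b ∈ A a b)
    (hA : ∀ a b : V, (SimpleGraph.induce (A a b) X).Connected)
    (D H : ℕ)
    (hii : ∀ a b d : V, ∀ x ∈ A a b, ∃ y, (y ∈ A a d ∨ y ∈ A d b) ∧ X.dist x y ≤ D)
    (hN : ∀ a b : V, ∀ w ∈ A a b, NearI X a b w H) (x y z w : V) :
    X.dist x z + X.dist y w ≤
      max (X.dist x y + X.dist z w) (X.dist x w + X.dist y z) + 4 * (H + D + 1) := by
  have sym : ∀ u v, X.dist u v = X.dist v u := fun u v => SimpleGraph.dist_comm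
  have tri : ∀ u v w, X.dist u w ≤ X.dist u v + X.dist v w := fun u v w => hX.dist_triangle
  have hor : ∀ d, ∀ m ∈ A x z, NearI X x d m (H + D) ∨ NearI X d z m (H + D) := by
    intro d m hm
    obtain ⟨t, ht, hmt⟩ := hii x z d m hm
    rcases ht with ht | ht
    · obtain ⟨s, hs, hts⟩ := hN _ _ t ht
      have := tri m t s
      exact Or.inl ⟨s, hs, by omega⟩
    · obtain ⟨s, hs, hts⟩ := hN _ _ t ht
      have := tri m t s
      exact Or.inr ⟨s, hs, by omega⟩
  have hmid : ∃ m ∈ A x z, NearI X x y m (H + D + 1) ∧ NearI X y z m (H + D + 1) := by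
    by_contra hno
    push Not at hno
    have mono : ∀ a b m, NearI X a b m (H + D) → NearI X a b m (H + D + 1) := by
      rintro a b m ⟨s, hs, h⟩
      exact ⟨s, hs, by omega⟩
    have step : ∀ u v : A x z, (SimpleGraph.induce (A x z) X).Walk u v →
        NearI X x y u (H + D) → NearI X x y v (H + D) := by
      intro u v p
      induction p with
      | nil => exact id
      | @cons u v w hadj p ih =>
        rintro ⟨s, hs, hus⟩
        apply ih
        have hadj' : X.Adj u v := hadj
        have h1 : X.dist (v : V) u = 1 := SimpleGraph.dist_eq_one_iff_adj.mpr hadj'.symm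
        have hv : NearI X x y v (H + D + 1) := ⟨s, hs, by have := tri v u s; omega⟩
        exact (hor y v v.2).resolve_right fun h => hno v v.2 hv (mono _ _ _ h)
    obtain ⟨p⟩ := (hA x z).preconnected ⟨x, hA1 x z⟩ ⟨z, hA2 x z⟩
    have hz := step _ _ p ⟨x, by simp, by simp⟩
    exact hno z (hA2 x z) (mono _ _ _ hz) ⟨z, by simp, by simp⟩
  obtain ⟨m, hm, ⟨s, hs, hms⟩, ⟨t, ht, hmt⟩⟩ := hmid
  have := tri x m z
  have := tri y m w
  have := sym y m
  have := sym s m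
  have := sym t m
  rcases hor w m hm with ⟨r, hr, hmr⟩ | ⟨r, hr, hmr⟩
  · apply le_trans _ (Nat.add_le_add_right (le_max_right _ _) _)
    have := tri x r m
    have := sym r m
    have := tri m r w
    have := tri y t m
    have := tri m t z
    omega
  · apply le_trans _ (Nat.add_le_add_right (le_max_left _ _) _)
    have := tri x s m
    have := tri m s y
    have := tri m r z
    have := tri w r m
    have := sym r m
    have := sym m w
    have := sym z w
    omega

theorem aux_k (D : ℕ) : ∃ k : ℕ, 4 * ((k + 3) * D + 2) + 6 * D + 2 ≤ 2 ^ k := by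
  refine ⟨2 * (18 * D + 10) , ?_⟩
  have h : 18 * D + 10 < 2 ^ (18 * D + 10) := Nat.lt_two_pow_self
  rw [two_mul, pow_add]
  have h2 := Nat.mul_le_mul h.le h.le
  nlinarith

/-- If a connected graph `X` carries, for each pair of vertices `a, b`, a connected subgraph
`A a b` containing `a` and `b`, such that (i) `A a b` has diameter at most `2` whenever
`a` and `b` are adjacent (i.e. the corresponding curves intersect at most twice), and
(ii) there is `D` such that every vertex of `A a b` is within distance `D` of
`A a d ∪ A d b`, then `X` is `δ`-hyperbolic for some `δ` depending only on `D`. -/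
theorem stmt_7 :
    ∃ f : ℝ → ℝ, ∀ (V : Type) (X : SimpleGraph V), X.Connected →
      ∀ (A : V → V → Set V),
      (∀ a b : V, a ∈ A a b) →
      (∀ a b : V, b ∈ A a b) →
      (∀ a b : V, (SimpleGraph.induce (A a b) X).Connected) →
      (∀ a b : V, X.Adj a b → ∀ x ∈ A a b, ∀ y ∈ A a b, (X.dist x y : ℝ) ≤ 2) →
      ∀ D : ℝ, 0 < D →
      (∀ a b d : V, ∀ x ∈ A a b,
        ∃ y, (y ∈ A a d ∨ y ∈ A d b) ∧ (X.dist x y : ℝ) ≤ D) →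
      GromovHyperbolicGraph X (f D) := by
  choose k hk using aux_k
  refine ⟨fun D => ((4 * (((k ⌈D⌉₊ + 3) * ⌈D⌉₊ + 2) + ⌈D⌉₊ + 1) : ℕ) : ℝ), ?_⟩
  intro V X hX A hA1 hA2 hA hi D hD hii
  refine ⟨Nat.cast_nonneg _, fun x y z w => ?_⟩
  have hi' : ∀ a b : V, X.Adj a b → ∀ x ∈ A a b, ∀ y ∈ A a b, X.dist x y ≤ 2 := by
    intro a b hab x hx y hy
    exact_mod_cast hi a b hab x hx y hy
  have hii' : ∀ a b d : V, ∀ x ∈ A a b,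
      ∃ y, (y ∈ A a d ∨ y ∈ A d b) ∧ X.dist x y ≤ ⌈D⌉₊ := by
    intro a b d x hx
    obtain ⟨y, hy, h⟩ := hii a b d x hx
    exact ⟨y, hy, by exact_mod_cast h.trans (Nat.le_ceil D)⟩
  have hN := fun a b => aux_near hX A hA1 hA2 hi' ⌈D⌉₊ hii' (k ⌈D⌉₊) _ rfl (hk _) _ a b rfl
  beta_reduce
  exact_mod_cast aux_four hX A hA1 hA2 hA ⌈D⌉₊ _ hii' hN x y z w
end
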